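/- Let m < -1 and let a, b : ℝ^M × ℝ × ℝ → ℂ satisfy the product-type symbol estimates |∂_z^γ ∂_ξ^α ∂_η^β a(z,ξ,η)| ≤ C ⟨ξ;η⟩^{m-α} ⟨η⟩^{m-β} (uniformly for z in compact sets), and similarly for b. Then c(z,ξ,η) = ∬ a(z, ξ-ζ, η-τ) b(z, ζ, τ) dζ dτ satisfies the same estimates: |∂_z^γ ∂_ξ^α ∂_η^β c(z,ξ,η)| ≤ C' ⟨ξ;η⟩^{m-α} ⟨η⟩^{m-β}. -/

import Mathlib

noncomputable section

/-- Directional derivative of a function on `ℝ^M` in the `i`-th coordinate direction. -/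
def dirDeriv {M : ℕ} (i : Fin M) (f : (Fin M → ℝ) → ℂ) : (Fin M → ℝ) → ℂ :=
  fun z => fderiv ℝ f z (Pi.single i 1)

/-- Iterated directional derivatives `∂_z^γ` along a list of coordinate directions. -/
def dirDerivs {M : ℕ} (L : List (Fin M)) (f : (Fin M → ℝ) → ℂ) : (Fin M → ℝ) → ℂ :=
  L.foldr dirDeriv f

/-- `a : ℝ^M × ℝ × ℝ → ℂ` is a product-type symbol of order `(m, m)`: for all
multiindices `γ` (encoded as lists of coordinate directions), integers `α, β ≥ 0` and
compact `K ⊂ ℝ^M`, `|∂_z^γ ∂_ξ^α ∂_η^β a(z,ξ,η)| ≤ C ⟨ξ;η⟩^{m-α} ⟨η⟩^{m-β}` on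
`K × ℝ × ℝ`, where `⟨ξ;η⟩ = √(1+ξ²+η²)` and `⟨η⟩ = √(1+η²)`. -/
def IsProdSymbolOfOrder {M : ℕ} (m : ℝ) (a : (Fin M → ℝ) → ℝ → ℝ → ℂ) : Prop :=
  ∀ (L : List (Fin M)) (α β : ℕ) (K : Set (Fin M → ℝ)), IsCompact K →
    ∃ C : ℝ, ∀ z ∈ K, ∀ ξ η : ℝ,
      ‖dirDerivs L (fun z' =>
          iteratedDeriv α (fun ξ' => iteratedDeriv β (fun η' => a z' ξ' η') η) ξ) z‖ ≤
        C * Real.sqrt (1 + ξ ^ 2 + η ^ 2) ^ (m - α) * Real.sqrt (1 + η ^ 2) ^ (m - β)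

namespace PS

open MeasureTheory

abbrev EE (M : ℕ) := (Fin M → ℝ) × ℝ × ℝ

variable {M : ℕ}

abbrev Smooth (f : EE M → ℂ) : Prop := ContDiff ℝ (⊤ : ℕ∞) f

/-- directional derivative -/
def D (v : EE M) (f : EE M → ℂ) : EE M → ℂ := fun p => fderiv ℝ f p v

def ez (i : Fin M) : EE M := (Pi.single i 1, 0, 0)
def ex : EE M := (0, 1, 0)
def ey : EE M := (0, 0, 1)

def lx : EE M →L[ℝ] ℝ :=
  (ContinuousLinearMap.fst ℝ ℝ ℝ).comp (ContinuousLinearMap.snd ℝ (Fin M → ℝ) (ℝ × ℝ))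
def ly : EE M →L[ℝ] ℝ :=
  (ContinuousLinearMap.snd ℝ ℝ ℝ).comp (ContinuousLinearMap.snd ℝ (Fin M → ℝ) (ℝ × ℝ))

lemma lx_apply (p : EE M) : lx p = p.2.1 := rfl
lemma ly_apply (p : EE M) : ly p = p.2.2 := rfl

/-- multiplication by a linear form -/
def mulL (l : EE M →L[ℝ] ℝ) (f : EE M → ℂ) : EE M → ℂ := fun p => (l p : ℂ) * f p

lemma Smooth.diff {f : EE M → ℂ} (hf : Smooth f) (p : EE M) : DifferentiableAt ℝ f p :=
  (hf.differentiable (by simp)) p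

lemma Smooth.D {f : EE M → ℂ} (hf : Smooth f) (v : EE M) : Smooth (D v f) := by
  unfold PS.D
  exact (ContDiff.fderiv_right (m := (⊤ : ℕ∞)) hf (by simp)).clm_apply contDiff_const

lemma Smooth.mulL {f : EE M → ℂ} (hf : Smooth f) (l : EE M →L[ℝ] ℝ) : Smooth (mulL l f) := by
  unfold PS.mulL
  exact (Complex.ofRealCLM.contDiff.comp l.contDiff).mul hf

lemma D_add {f g : EE M → ℂ} (hf : Smooth f) (hg : Smooth g) (v : EE M) :
    D v (f + g) = D v f + D v g := by
  ext p
  simp [D, fderiv_add (hf.diff p) (hg.diff p)]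

lemma D_smul {f : EE M → ℂ} (hf : Smooth f) (c : ℝ) (v : EE M) :
    D v (c • f) = c • D v f := by
  ext p
  simp [D, fderiv_const_smul (hf.diff p) c]

lemma D_mulL {f : EE M → ℂ} (hf : Smooth f) (l : EE M →L[ℝ] ℝ) (v : EE M) :
    D v (mulL l f) = mulL l (D v f) + (l v) • f := by
  ext p
  have h1 : HasFDerivAt (fun p : EE M => ((l p : ℝ) : ℂ)) (Complex.ofRealCLM.comp l) p :=
    (Complex.ofRealCLM.comp l).hasFDerivAt
  have h2 := h1.mul (hf.diff p).hasFDerivAt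
  have h3 : fderiv ℝ (mulL l f) p = _ := h2.fderiv
  have h4 : D v (mulL l f) p = fderiv ℝ (mulL l f) p v := rfl
  rw [h4, h3]
  simp [D, mulL]
  ring

lemma D_comm {f : EE M → ℂ} (hf : Smooth f) (v w : EE M) : D v (D w f) = D w (D v f) := by
  have key : ∀ (v w : EE M) p, D v (D w f) p = fderiv ℝ (fderiv ℝ f) p v w := by
    intro v w p
    have hd : DifferentiableAt ℝ (fderiv ℝ f) p :=
      ((ContDiff.fderiv_right (m := (⊤ : ℕ∞)) hf (by simp)).differentiable (by simp)) p
    have := (hd.hasFDerivAt.clm_apply (hasFDerivAt_const w p)).fderiv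
    have h4 : D v (D w f) p = fderiv ℝ (fun y => fderiv ℝ f y w) p v := rfl
    rw [h4, this]; simp
  ext p
  rw [key, key]
  exact (hf.contDiffAt.isSymmSndFDerivAt (by simp; exact WithTop.coe_le_coe.2 (le_top : (2 : ℕ∞) ≤ ⊤))) v w

/-- Japanese brackets -/
def jb2 (x y : ℝ) : ℝ := Real.sqrt (1 + x ^ 2 + y ^ 2)
def jb (y : ℝ) : ℝ := Real.sqrt (1 + y ^ 2)

lemma one_le_jb (y : ℝ) : 1 ≤ jb y := by
  unfold jb; rw [Real.one_le_sqrt]; nlinarith [sq_nonneg y]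
lemma jb_le_jb2 (x y : ℝ) : jb y ≤ jb2 x y := by
  unfold jb jb2; apply Real.sqrt_le_sqrt; nlinarith [sq_nonneg x]
lemma jb_le_jb2' (x y : ℝ) : jb x ≤ jb2 x y := by
  unfold jb jb2; apply Real.sqrt_le_sqrt; nlinarith [sq_nonneg y]
lemma jb_pos (y : ℝ) : 0 < jb y := lt_of_lt_of_le one_pos (one_le_jb y)
lemma jb2_pos (x y : ℝ) : 0 < jb2 x y := lt_of_lt_of_le (jb_pos y) (jb_le_jb2 x y)
lemma abs_le_jb (y : ℝ) : |y| ≤ jb y := by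
  unfold jb; apply Real.abs_le_sqrt; linarith
lemma abs_le_jb2 (x y : ℝ) : |x| ≤ jb2 x y := (abs_le_jb x).trans (jb_le_jb2' x y)

/-- the weight -/
def wt (p q x y : ℝ) : ℝ := jb2 x y ^ p * jb y ^ q

lemma wt_pos (p q x y : ℝ) : 0 < wt p q x y :=
  mul_pos (Real.rpow_pos_of_pos (jb2_pos x y) _) (Real.rpow_pos_of_pos (jb_pos y) _)

lemma wt_mono {p q p' q' : ℝ} (h1 : p ≤ p') (h2 : p + q ≤ p' + q') (x y : ℝ) :
    wt p q x y ≤ wt p' q' x y := by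
  have hp := jb_pos y
  have hp2 := jb2_pos x y
  have e1 : jb2 x y ^ p = jb2 x y ^ p' * jb2 x y ^ (p - p') := by
    rw [← Real.rpow_add hp2]; congr 1; ring
  have e2 : jb2 x y ^ (p - p') ≤ jb y ^ (p - p') :=
    Real.rpow_le_rpow_of_nonpos hp (jb_le_jb2 x y) (by linarith)
  have e3 : jb y ^ (p - p') * jb y ^ q ≤ jb y ^ q' := by
    rw [← Real.rpow_add hp]
    exact Real.rpow_le_rpow_of_exponent_le (one_le_jb y) (by linarith)
  unfold wt
  calc jb2 x y ^ p * jb y ^ q = jb2 x y ^ p' * (jb2 x y ^ (p - p') * jb y ^ q) := by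
        rw [e1]; ring
    _ ≤ jb2 x y ^ p' * (jb y ^ (p - p') * jb y ^ q) := by gcongr
    _ ≤ _ := by gcongr

lemma wt_x (p q x y : ℝ) : wt (p - 1) q x y * jb2 x y = wt p q x y := by
  unfold wt
  rw [Real.rpow_sub_one (jb2_pos x y).ne']
  field_simp [(jb2_pos x y).ne']

lemma wt_y (p q x y : ℝ) : wt p (q - 1) x y * jb y = wt p q x y := by
  unfold wt
  rw [Real.rpow_sub_one (jb_pos y).ne']
  field_simp [(jb_pos y).ne']

/-- bound of order `(p,q)` -/
def Bd (p q : ℝ) (f : EE M → ℂ) : Prop :=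
  ∀ K : Set (Fin M → ℝ), IsCompact K → ∃ C : ℝ, 0 ≤ C ∧ ∀ z ∈ K, ∀ x y : ℝ,
    ‖f (z, x, y)‖ ≤ C * wt p q x y

lemma Bd.mono {p q p' q' : ℝ} {f : EE M → ℂ} (h : Bd p q f) (h1 : p ≤ p')
    (h2 : p + q ≤ p' + q') : Bd p' q' f := by
  intro K hK
  obtain ⟨C, hC, h⟩ := h K hK
  exact ⟨C, hC, fun z hz x y => (h z hz x y).trans
    (mul_le_mul_of_nonneg_left (wt_mono h1 h2 x y) hC)⟩

lemma Bd.add {p q : ℝ} {f g : EE M → ℂ} (hf : Bd p q f) (hg : Bd p q g) : Bd p q (f + g) := by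
  intro K hK
  obtain ⟨C, hC, h⟩ := hf K hK
  obtain ⟨C', hC', h'⟩ := hg K hK
  refine ⟨C + C', by positivity, fun z hz x y => ?_⟩
  have := h z hz x y
  have := h' z hz x y
  calc _ ≤ _ := norm_add_le _ _
    _ ≤ _ := by rw [add_mul]; linarith

lemma Bd.smul {p q : ℝ} {f : EE M → ℂ} (hf : Bd p q f) (c : ℝ) : Bd p q (c • f) := by
  intro K hK
  obtain ⟨C, hC, h⟩ := hf K hK
  refine ⟨|c| * C, by positivity, fun z hz x y => ?_⟩
  have := h z hz x y
  simp only [Pi.smul_apply, norm_smul, Real.norm_eq_abs, mul_assoc]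
  gcongr

lemma Bd.mulx {p q : ℝ} {f : EE M → ℂ} (hf : Bd p q f) : Bd (p + 1) q (mulL lx f) := by
  intro K hK
  obtain ⟨C, hC, h⟩ := hf K hK
  refine ⟨C, hC, fun z hz x y => ?_⟩
  have h1 := h z hz x y
  have h2 := wt_x (p + 1) q x y
  rw [add_sub_cancel_right] at h2
  rw [← h2]
  simp only [mulL, norm_mul, lx_apply, Complex.norm_real, Real.norm_eq_abs]
  calc |x| * ‖f (z, x, y)‖ ≤ jb2 x y * (C * wt p q x y) := by
        gcongr
        · exact (jb2_pos x y).le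
        · exact abs_le_jb2 x y
    _ = _ := by ring

lemma Bd.muly {p q : ℝ} {f : EE M → ℂ} (hf : Bd p q f) : Bd p (q + 1) (mulL ly f) := by
  intro K hK
  obtain ⟨C, hC, h⟩ := hf K hK
  refine ⟨C, hC, fun z hz x y => ?_⟩
  have h1 := h z hz x y
  have h2 := wt_y p (q + 1) x y
  rw [add_sub_cancel_right] at h2
  rw [← h2]
  simp only [mulL, norm_mul, ly_apply, Complex.norm_real, Real.norm_eq_abs]
  calc |y| * ‖f (z, x, y)‖ ≤ jb y * (C * wt p q x y) := by
        gcongr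
        · exact (jb_pos y).le
        · exact abs_le_jb y
    _ = _ := by ring

lemma jb2_le (x y : ℝ) : jb2 x y ≤ 1 + |x| + |y| := by
  unfold jb2
  rw [Real.sqrt_le_left (by positivity)]
  nlinarith [abs_nonneg x, abs_nonneg y, sq_abs x, sq_abs y,
    mul_nonneg (abs_nonneg x) (abs_nonneg y)]

lemma jb_le (y : ℝ) : jb y ≤ 1 + |y| := by
  unfold jb
  rw [Real.sqrt_le_left (by positivity)]
  nlinarith [abs_nonneg y, sq_abs y]

lemma Bd.dropx {p q : ℝ} {f : EE M → ℂ} (hf : Bd p q f) (hx : Bd p q (mulL lx f))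
    (hy : Bd p q (mulL ly f)) : Bd (p - 1) q f := by
  intro K hK
  obtain ⟨C, hC, h⟩ := hf K hK
  obtain ⟨C1, hC1, h1⟩ := hx K hK
  obtain ⟨C2, hC2, h2⟩ := hy K hK
  refine ⟨C + C1 + C2, by positivity, fun z hz x y => ?_⟩
  have a0 := h z hz x y
  have a1 := h1 z hz x y
  have a2 := h2 z hz x y
  simp only [mulL, norm_mul, ly_apply, lx_apply, Complex.norm_real, Real.norm_eq_abs] at a1 a2
  have := jb2_pos x y
  rw [← mul_le_mul_iff_left₀ this, mul_assoc, wt_x]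
  nlinarith [mul_le_mul_of_nonneg_right (jb2_le x y) (norm_nonneg (f (z, x, y)))]

lemma Bd.dropy {p q : ℝ} {f : EE M → ℂ} (hf : Bd p q f)
    (hy : Bd p q (mulL ly f)) : Bd p (q - 1) f := by
  intro K hK
  obtain ⟨C, hC, h⟩ := hf K hK
  obtain ⟨C2, hC2, h2⟩ := hy K hK
  refine ⟨C + C2, by positivity, fun z hz x y => ?_⟩
  have a0 := h z hz x y
  have a2 := h2 z hz x y
  simp only [mulL, norm_mul, ly_apply, Complex.norm_real, Real.norm_eq_abs] at a2
  have := jb_pos y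
  rw [← mul_le_mul_iff_left₀ this, mul_assoc, wt_y]
  nlinarith [mul_le_mul_of_nonneg_right (jb_le y) (norm_nonneg (f (z, x, y)))]

/-- symbol estimates for up to `n` derivatives, in any order -/
def SymN : ℕ → ℝ → ℝ → (EE M → ℂ) → Prop
  | 0, p, q, f => Smooth f ∧ Bd p q f
  | n + 1, p, q, f => (Smooth f ∧ Bd p q f) ∧ (∀ i, SymN n p q (D (ez i) f)) ∧
      SymN n (p - 1) q (D ex f) ∧ SymN n p (q - 1) (D ey f)

lemma SymN.base {n : ℕ} {p q : ℝ} {f : EE M → ℂ} (h : SymN n p q f) : Smooth f ∧ Bd p q f := by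
  cases n with
  | zero => exact h
  | succ n => exact h.1

lemma SymN.pred {n : ℕ} : ∀ {p q : ℝ} {f : EE M → ℂ}, SymN (n + 1) p q f → SymN n p q f := by
  induction n with
  | zero => intro p q f h; exact h.1
  | succ n ih => intro p q f h; exact ⟨h.1, fun i => ih (h.2.1 i), ih h.2.2.1, ih h.2.2.2⟩

lemma SymN.mono {n : ℕ} : ∀ {p q p' q' : ℝ} {f : EE M → ℂ}, SymN n p q f → p ≤ p' →
    p + q ≤ p' + q' → SymN n p' q' f := by
  induction n with
  | zero => intro p q p' q' f h h1 h2; exact ⟨h.1, h.2.mono h1 h2⟩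
  | succ n ih =>
    intro p q p' q' f h h1 h2
    exact ⟨⟨h.1.1, h.1.2.mono h1 h2⟩, fun i => ih (h.2.1 i) h1 h2,
      ih h.2.2.1 (by linarith) (by linarith), ih h.2.2.2 (by linarith) (by linarith)⟩

lemma SymN.add {n : ℕ} : ∀ {p q : ℝ} {f g : EE M → ℂ}, SymN n p q f → SymN n p q g →
    SymN n p q (f + g) := by
  induction n with
  | zero => intro p q f g h h'; exact ⟨h.1.add h'.1, h.2.add h'.2⟩
  | succ n ih =>
    intro p q f g h h'
    refine ⟨⟨h.1.1.add h'.1.1, h.1.2.add h'.1.2⟩, fun i => ?_, ?_, ?_⟩ <;>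
      rw [D_add h.1.1 h'.1.1]
    · exact ih (h.2.1 i) (h'.2.1 i)
    · exact ih h.2.2.1 h'.2.2.1
    · exact ih h.2.2.2 h'.2.2.2

lemma SymN.smul {n : ℕ} (c : ℝ) : ∀ {p q : ℝ} {f : EE M → ℂ}, SymN n p q f →
    SymN n p q (c • f) := by
  induction n with
  | zero => intro p q f h; exact ⟨contDiff_const.smul h.1, h.2.smul c⟩
  | succ n ih =>
    intro p q f h
    refine ⟨⟨contDiff_const.smul h.1.1, h.1.2.smul c⟩, fun i => ?_, ?_, ?_⟩ <;>
      rw [D_smul h.1.1]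
    · exact ih (h.2.1 i)
    · exact ih h.2.2.1
    · exact ih h.2.2.2

lemma SymN.sub {n : ℕ} {p q : ℝ} {f g : EE M → ℂ} (h : SymN n p q f) (h' : SymN n p q g) :
    SymN n p q (f - g) := by
  have := h.add (h'.smul (-1))
  simpa [sub_eq_add_neg] using this

@[simp] lemma lx_ez (i : Fin M) : lx (ez i) = 0 := rfl
@[simp] lemma ly_ez (i : Fin M) : ly (ez i) = 0 := rfl
@[simp] lemma lx_ex : lx (ex : EE M) = 1 := rfl
@[simp] lemma ly_ex : ly (ex : EE M) = 0 := rfl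
@[simp] lemma lx_ey : lx (ey : EE M) = 0 := rfl
@[simp] lemma ly_ey : ly (ey : EE M) = 1 := rfl

lemma SymN.mulx {n : ℕ} : ∀ {p q : ℝ} {f : EE M → ℂ}, SymN n p q f →
    SymN n (p + 1) q (mulL lx f) := by
  induction n with
  | zero => intro p q f h; exact ⟨h.1.mulL _, h.2.mulx⟩
  | succ n ih =>
    intro p q f h
    refine ⟨⟨h.1.1.mulL _, h.1.2.mulx⟩, fun i => ?_, ?_, ?_⟩ <;>
      rw [D_mulL h.1.1]
    · simpa only [lx_ez, zero_smul, add_zero] using ih (h.2.1 i)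
    · simp only [lx_ex, one_smul]
      refine SymN.add ?_ (h.pred.mono (by linarith) (by linarith))
      exact (ih h.2.2.1).mono (by linarith) (by linarith)
    · simpa only [lx_ey, zero_smul, add_zero] using ih h.2.2.2

lemma SymN.muly {n : ℕ} : ∀ {p q : ℝ} {f : EE M → ℂ}, SymN n p q f →
    SymN n p (q + 1) (mulL ly f) := by
  induction n with
  | zero => intro p q f h; exact ⟨h.1.mulL _, h.2.muly⟩
  | succ n ih =>
    intro p q f h
    refine ⟨⟨h.1.1.mulL _, h.1.2.muly⟩, fun i => ?_, ?_, ?_⟩ <;>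
      rw [D_mulL h.1.1]
    · simpa only [ly_ez, zero_smul, add_zero] using ih (h.2.1 i)
    · simpa only [ly_ex, zero_smul, add_zero] using ih h.2.2.1
    · simp only [ly_ey, one_smul]
      refine SymN.add ?_ (h.pred.mono (by linarith) (by linarith))
      exact (ih h.2.2.2).mono (by linarith) (by linarith)

lemma mulL_D {f : EE M → ℂ} (hf : Smooth f) (l : EE M →L[ℝ] ℝ) (v : EE M) :
    mulL l (D v f) = D v (mulL l f) - (l v) • f := by
  rw [D_mulL hf]; simp

lemma SymN.dropx {n : ℕ} : ∀ {p q : ℝ} {f : EE M → ℂ}, SymN n p q f →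
    SymN n p q (mulL lx f) → SymN n p q (mulL ly f) → SymN n (p - 1) q f := by
  induction n with
  | zero => intro p q f h hx hy; exact ⟨h.1, h.2.dropx hx.2 hy.2⟩
  | succ n ih =>
    intro p q f h hx hy
    have h0 := ih h.pred hx.pred hy.pred
    refine ⟨⟨h.1.1, h.1.2.dropx hx.1.2 hy.1.2⟩, fun i => ?_, ?_, ?_⟩
    · refine ih (h.2.1 i) ?_ ?_ <;> rw [mulL_D h.1.1]
      · simpa using hx.2.1 i
      · simpa using hy.2.1 i
    · refine ih h.2.2.1 ?_ ?_ <;> rw [mulL_D h.1.1]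
      · simpa using hx.2.2.1.sub h0
      · simpa using hy.2.2.1
    · refine ih h.2.2.2 ?_ ?_ <;> rw [mulL_D h.1.1]
      · simpa using hx.2.2.2
      · simpa using hy.2.2.2.sub (h0.mono (by linarith) (by linarith))

lemma SymN.dropy {n : ℕ} : ∀ {p q : ℝ} {f : EE M → ℂ}, SymN n p q f →
    SymN n p q (mulL ly f) → SymN n p (q - 1) f := by
  induction n with
  | zero => intro p q f h hy; exact ⟨h.1, h.2.dropy hy.2⟩
  | succ n ih =>
    intro p q f h hy
    have h0 := ih h.pred hy.pred
    refine ⟨⟨h.1.1, h.1.2.dropy hy.1.2⟩, fun i => ?_, ?_, ?_⟩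
    · refine ih (h.2.1 i) ?_ ; rw [mulL_D h.1.1]
      simpa using hy.2.1 i
    · refine ih h.2.2.1 ?_ ; rw [mulL_D h.1.1]
      simpa using hy.2.2.1
    · refine ih h.2.2.2 ?_ ; rw [mulL_D h.1.1]
      simpa using hy.2.2.2.sub h0

/-- all symbol estimates -/
def Sym (p q : ℝ) (f : EE M → ℂ) : Prop := ∀ n, SymN n p q f

lemma Sym.smooth {p q : ℝ} {f : EE M → ℂ} (h : Sym p q f) : Smooth f := (h 0).1
lemma Sym.bd {p q : ℝ} {f : EE M → ℂ} (h : Sym p q f) : Bd p q f := (h 0).2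
lemma Sym.Dz {p q : ℝ} {f : EE M → ℂ} (h : Sym p q f) (i : Fin M) : Sym p q (D (ez i) f) :=
  fun n => (h (n + 1)).2.1 i
lemma Sym.Dx {p q : ℝ} {f : EE M → ℂ} (h : Sym p q f) : Sym (p - 1) q (D ex f) :=
  fun n => (h (n + 1)).2.2.1
lemma Sym.Dy {p q : ℝ} {f : EE M → ℂ} (h : Sym p q f) : Sym p (q - 1) (D ey f) :=
  fun n => (h (n + 1)).2.2.2
lemma Sym.mono {p q p' q' : ℝ} {f : EE M → ℂ} (h : Sym p q f) (h1 : p ≤ p')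
    (h2 : p + q ≤ p' + q') : Sym p' q' f := fun n => (h n).mono h1 h2
lemma Sym.mulx {p q : ℝ} {f : EE M → ℂ} (h : Sym p q f) : Sym (p + 1) q (mulL lx f) :=
  fun n => (h n).mulx
lemma Sym.muly {p q : ℝ} {f : EE M → ℂ} (h : Sym p q f) : Sym p (q + 1) (mulL ly f) :=
  fun n => (h n).muly
lemma Sym.add {p q : ℝ} {f g : EE M → ℂ} (h : Sym p q f) (h' : Sym p q g) : Sym p q (f + g) :=
  fun n => (h n).add (h' n)
lemma Sym.smul {p q : ℝ} {f : EE M → ℂ} (h : Sym p q f) (c : ℝ) : Sym p q (c • f) :=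
  fun n => (h n).smul c

lemma basis_expand (v : EE M) :
    v = ∑ i, v.1 i • (ez i : EE M) + v.2.1 • ex + v.2.2 • ey := by
  refine Prod.ext ?_ (Prod.ext ?_ ?_)
  · simp [ez, ex, ey, Prod.fst_sum, ← Pi.single_smul']
    ext j; simp [Finset.sum_apply, Pi.single_apply]
  · simp [ez, ex, ey, Prod.snd_sum]
  · simp [ez, ex, ey, Prod.snd_sum]

lemma D_expand (v : EE M) (f : EE M → ℂ) :
    D v f = ∑ i, v.1 i • D (ez i) f + v.2.1 • D ex f + v.2.2 • D ey f := by
  ext p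
  conv_lhs => rw [basis_expand v]
  simp [D, map_add, map_sum, map_smul]

lemma Sym.zero {p q : ℝ} {f : EE M → ℂ} (h : Sym p q f) : Sym p q (0 : EE M → ℂ) := by
  simpa using h.smul 0

lemma Sym.Dv {p q : ℝ} {f : EE M → ℂ} (h : Sym p q f) (v : EE M) : Sym p q (D v f) := by
  rw [D_expand]
  refine Sym.add (Sym.add ?_ ?_) ?_
  · refine Finset.sum_induction _ (Sym p q) (fun _ _ => Sym.add) h.zero ?_
    intro i _
    exact (h.Dz i).smul _
  · exact (h.Dx.mono (by linarith) (by linarith)).smul _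
  · exact (h.Dy.mono (by linarith) (by linarith)).smul _

lemma norm_fderiv_le (f : EE M → ℂ) (p : EE M) :
    ‖fderiv ℝ f p‖ ≤ ∑ i, ‖D (ez i) f p‖ + ‖D ex f p‖ + ‖D ey f p‖ := by
  refine ContinuousLinearMap.opNorm_le_bound _ (by positivity) fun v => ?_
  have h : fderiv ℝ f p v = D v f p := rfl
  rw [h, D_expand]
  have hv1 : ∀ i, ‖v.1 i‖ ≤ ‖v‖ := fun i => (norm_le_pi_norm v.1 i).trans (norm_fst_le v)
  have hv2 : ‖v.2.1‖ ≤ ‖v‖ := (norm_fst_le v.2).trans (norm_snd_le v)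
  have hv3 : ‖v.2.2‖ ≤ ‖v‖ := (norm_snd_le v.2).trans (norm_snd_le v)
  simp only [Pi.add_apply, Finset.sum_apply, Pi.smul_apply]
  refine (norm_add_le _ _).trans ?_
  rw [add_mul, add_mul, Finset.sum_mul]
  refine add_le_add ((norm_add_le _ _).trans (add_le_add ((norm_sum_le _ _).trans ?_) ?_)) ?_
  · refine Finset.sum_le_sum fun i _ => ?_
    rw [norm_smul, mul_comm]
    gcongr
    exact hv1 i
  · rw [norm_smul, mul_comm]; gcongr
  · rw [norm_smul, mul_comm]; gcongr

/-- convolution in the fibre variables -/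
def Conv (a b : EE M → ℂ) : EE M → ℂ :=
  fun p => ∫ q : ℝ × ℝ, a (p.1, p.2 - q) * b (p.1, q)

/-- integrable majorant -/
def J (m : ℝ) (q : ℝ × ℝ) : ℝ := jb q.1 ^ m * jb q.2 ^ m

lemma integrable_jb {m : ℝ} (hm : m < -1) : Integrable (fun x : ℝ => jb x ^ m) := by
  have h := integrable_rpow_neg_one_add_norm_sq (E := ℝ) (μ := volume) (r := -m)
    (by simp; linarith)
  refine h.congr (Filter.Eventually.of_forall fun x => ?_)
  simp only [jb, Real.norm_eq_abs, sq_abs, neg_neg]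
  rw [Real.sqrt_eq_rpow, ← Real.rpow_mul (by positivity)]
  congr 1; ring

lemma integrable_J {m : ℝ} (hm : m < -1) : Integrable (J m) :=
  (integrable_jb hm).mul_prod (integrable_jb hm)

lemma J_nonneg (m : ℝ) (q : ℝ × ℝ) : 0 ≤ J m q :=
  mul_nonneg (Real.rpow_nonneg (jb_pos _).le _) (Real.rpow_nonneg (jb_pos _).le _)

lemma J_le_one {m : ℝ} (hm : m ≤ 0) (q : ℝ × ℝ) : J m q ≤ 1 :=
  mul_le_one₀ (Real.rpow_le_one_of_one_le_of_nonpos (one_le_jb _) hm)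
    (Real.rpow_nonneg (jb_pos _).le _) (Real.rpow_le_one_of_one_le_of_nonpos (one_le_jb _) hm)

lemma wt_le_J {m : ℝ} (hm : m ≤ 0) (x y : ℝ) : wt m m x y ≤ J m (x, y) := by
  unfold wt J
  have : jb2 x y ^ m ≤ jb x ^ m := Real.rpow_le_rpow_of_nonpos (jb_pos x) (jb_le_jb2' x y) hm
  have h2 := (Real.rpow_nonneg (jb_pos y).le m)
  simp only
  gcongr

lemma Bd.J {m : ℝ} (hm : m ≤ 0) {f : EE M → ℂ} (h : Bd m m f) (K : Set (Fin M → ℝ))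
    (hK : IsCompact K) : ∃ C, 0 ≤ C ∧ ∀ z ∈ K, ∀ q : ℝ × ℝ, ‖f (z, q)‖ ≤ C * J m q := by
  obtain ⟨C, hC, h⟩ := h K hK
  exact ⟨C, hC, fun z hz q => (h z hz q.1 q.2).trans
    (mul_le_mul_of_nonneg_left (wt_le_J hm _ _) hC)⟩

/-- bounded, uniformly for `z` in compact sets -/
def Bdd (f : EE M → ℂ) : Prop :=
  ∀ K : Set (Fin M → ℝ), IsCompact K → ∃ C : ℝ, 0 ≤ C ∧ ∀ z ∈ K, ∀ q : ℝ × ℝ,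
    ‖f (z, q)‖ ≤ C

lemma Bd.bdd {p q : ℝ} {f : EE M → ℂ} (h : Bd p q f) (h1 : p ≤ 0) (h2 : p + q ≤ 0) :
    Bdd f := by
  intro K hK
  obtain ⟨C, hC, h⟩ := (h.mono (p' := 0) (q' := 0) h1 (by linarith)) K hK
  refine ⟨C, hC, fun z hz q => ?_⟩
  simpa [wt] using h z hz q.1 q.2

lemma fderiv_J {m : ℝ} (hm : m ≤ 0) {f : EE M → ℂ} (h : Sym m m f) (K : Set (Fin M → ℝ))
    (hK : IsCompact K) : ∃ C, 0 ≤ C ∧ ∀ z ∈ K, ∀ q : ℝ × ℝ,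
      ‖fderiv ℝ f (z, q)‖ ≤ C * J m q := by
  choose C hC h0 using fun i => (h.Dv (ez i)).bd.J hm K hK
  obtain ⟨C1, hC1, h1⟩ := (h.Dv ex).bd.J hm K hK
  obtain ⟨C2, hC2, h2⟩ := (h.Dv ey).bd.J hm K hK
  refine ⟨∑ i, C i + C1 + C2, ?_, fun z hz q => ?_⟩
  · have := Finset.sum_nonneg (s := Finset.univ) (fun i _ => hC i)
    positivity
  · refine (norm_fderiv_le f _).trans ?_
    rw [add_mul, add_mul, Finset.sum_mul]
    exact add_le_add (add_le_add (Finset.sum_le_sum fun i _ => h0 i z hz q) (h1 z hz q))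
      (h2 z hz q)

lemma cont_slice {F : Type*} [TopologicalSpace F] {f : EE M → F} (hf : Continuous f)
    (z : Fin M → ℝ) : Continuous (fun q : ℝ × ℝ => f (z, q)) := by fun_prop

lemma cont_slice' {F : Type*} [TopologicalSpace F] {f : EE M → F} (hf : Continuous f)
    (p : EE M) : Continuous (fun q : ℝ × ℝ => f (p.1, p.2 - q)) := by fun_prop

/-- integrability when the right factor decays -/
lemma int_right {m : ℝ} (hm : m < -1) {a b : EE M → ℂ} (ha : Smooth a) (hb : Smooth b)
    (hA : Bdd a) (hB : Bd m m b) (p : EE M) :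
    Integrable (fun q : ℝ × ℝ => a (p.1, p.2 - q) * b (p.1, q)) := by
  obtain ⟨C, hC, h⟩ := hA {p.1} isCompact_singleton
  obtain ⟨C', hC', h'⟩ := hB.J (by linarith) {p.1} isCompact_singleton
  refine ((integrable_J hm).const_mul (C * C')).mono'
    ((cont_slice' ha.continuous p).mul (cont_slice hb.continuous p.1)).aestronglyMeasurable
    (Filter.Eventually.of_forall fun q => ?_)
  rw [norm_mul, mul_assoc]
  exact mul_le_mul (h _ rfl _) (h' _ rfl _) (norm_nonneg _) hC

/-- integrability when the left factor decays -/
lemma int_left {m : ℝ} (hm : m < -1) {a b : EE M → ℂ} (ha : Smooth a) (hb : Smooth b)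
    (hA : Bd m m a) (hB : Bdd b) (p : EE M) :
    Integrable (fun q : ℝ × ℝ => a (p.1, p.2 - q) * b (p.1, q)) := by
  have := (int_right hm hb ha hB hA p).comp_sub_left p.2
  refine this.congr (Filter.Eventually.of_forall fun q => ?_)
  simp [mul_comm]

lemma triple_le {m : ℝ} (hm : m ≤ 0) {s t u : ℝ} (hs : 1 ≤ s) (ht : 1 ≤ t) (hu : 1 ≤ u)
    (h : u ≤ s + t) : s ^ m * t ^ m ≤ 2 ^ (-m) * u ^ m * (s ^ m + t ^ m) := by
  have key : ∀ {s t : ℝ}, 1 ≤ s → 1 ≤ t → u ≤ s + t → s ≤ t →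
      s ^ m * t ^ m ≤ 2 ^ (-m) * u ^ m * (s ^ m + t ^ m) := by
    intro s t hs ht h hst
    have h1 : t ^ m ≤ (u / 2) ^ m :=
      Real.rpow_le_rpow_of_nonpos (by linarith) (by linarith) hm
    have h2 : (u / 2) ^ m = 2 ^ (-m) * u ^ m := by
      rw [Real.div_rpow (by linarith) (by norm_num), Real.rpow_neg (by norm_num)]
      field_simp
    have hs0 : 0 ≤ s ^ m := Real.rpow_nonneg (by linarith) _
    have ht0 : 0 ≤ t ^ m := Real.rpow_nonneg (by linarith) _
    rw [← h2]
    have h3 : 0 ≤ (u / 2) ^ m := ht0.trans h1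
    nlinarith [mul_nonneg h3 ht0, mul_le_mul_of_nonneg_left h1 hs0]
  rcases le_total s t with hst | hst
  · exact key hs ht h hst
  · have := key ht hs (by linarith) hst
    linarith [mul_comm (s ^ m) (t ^ m), add_comm (s ^ m) (t ^ m),
      congrArg (fun w => 2 ^ (-m) * u ^ m * w) (add_comm (s ^ m) (t ^ m))]

lemma jb2_add (x y x' y' : ℝ) : jb2 (x + x') (y + y') ≤ jb2 x y + jb2 x' y' := by
  have h1 := jb2_pos x y
  have h2 := jb2_pos x' y'
  have e1 : jb2 x y ^ 2 = 1 + x ^ 2 + y ^ 2 := Real.sq_sqrt (by positivity)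
  have e2 : jb2 x' y' ^ 2 = 1 + x' ^ 2 + y' ^ 2 := Real.sq_sqrt (by positivity)
  have e3 : x * x' + y * y' ≤ jb2 x y * jb2 x' y' := by
    refine abs_le_of_sq_le_sq' ?_ (by positivity) |>.2
    rw [mul_pow, e1, e2]
    nlinarith [sq_nonneg (x * y' - y * x'), sq_nonneg x, sq_nonneg y, sq_nonneg x', sq_nonneg y']
  conv_lhs => unfold jb2
  rw [Real.sqrt_le_left (by positivity)]
  nlinarith

lemma jb_add (y y' : ℝ) : jb (y + y') ≤ jb y + jb y' := by
  have := jb2_add 0 y 0 y'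
  simpa [jb2, jb] using this

lemma wt_conv {m : ℝ} (hm : m ≤ 0) (x y : ℝ) (q : ℝ × ℝ) :
    wt m m (x - q.1) (y - q.2) * wt m m q.1 q.2 ≤
      (2 ^ (-m) * 2 ^ (-m) * wt m m x y) *
        ((jb (x - q.1) ^ m + jb q.1 ^ m) * (jb (y - q.2) ^ m + jb q.2 ^ m)) := by
  have h1 := triple_le hm ((one_le_jb _).trans (jb_le_jb2 (x - q.1) (y - q.2)))
    ((one_le_jb _).trans (jb_le_jb2 q.1 q.2)) ((one_le_jb _).trans (jb_le_jb2 x y))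
    (by simpa using jb2_add (x - q.1) (y - q.2) q.1 q.2)
  have h2 := triple_le hm (one_le_jb (y - q.2)) (one_le_jb q.2) (one_le_jb y)
    (by simpa using jb_add (y - q.2) q.2)
  have p1 := Real.rpow_nonneg (jb_pos (y - q.2)).le m
  have p2 := Real.rpow_nonneg (jb_pos (q.2)).le m
  have p3 := Real.rpow_nonneg (jb_pos y).le m
  have p4 := Real.rpow_nonneg (jb2_pos x y).le m
  have p5 := Real.rpow_nonneg (jb2_pos q.1 q.2).le m
  have p6 := Real.rpow_nonneg (jb2_pos (x - q.1) (y - q.2)).le m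
  have h3 : jb2 (x - q.1) (y - q.2) ^ m ≤ jb (x - q.1) ^ m :=
    Real.rpow_le_rpow_of_nonpos (jb_pos _) (jb_le_jb2' _ _) hm
  have h4 : jb2 q.1 q.2 ^ m ≤ jb q.1 ^ m :=
    Real.rpow_le_rpow_of_nonpos (jb_pos _) (jb_le_jb2' _ _) hm
  unfold wt
  calc _ = (jb2 (x - q.1) (y - q.2) ^ m * jb2 q.1 q.2 ^ m) *
        (jb (y - q.2) ^ m * jb q.2 ^ m) := by ring
    _ ≤ (2 ^ (-m) * jb2 x y ^ m * (jb2 (x - q.1) (y - q.2) ^ m + jb2 q.1 q.2 ^ m)) *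
        (2 ^ (-m) * jb y ^ m * (jb (y - q.2) ^ m + jb q.2 ^ m)) := by
      apply mul_le_mul h1 h2 <;> positivity
    _ ≤ (2 ^ (-m) * jb2 x y ^ m * (jb (x - q.1) ^ m + jb q.1 ^ m)) *
        (2 ^ (-m) * jb y ^ m * (jb (y - q.2) ^ m + jb q.2 ^ m)) := by gcongr
    _ = _ := by ring

lemma Bd.conv {m : ℝ} (hm : m < -1) {a b : EE M → ℂ} (ha : Bd m m a) (hb : Bd m m b) :
    Bd m m (Conv a b) := by
  intro K hK
  obtain ⟨C, hC, h⟩ := ha K hK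
  obtain ⟨C', hC', h'⟩ := hb K hK
  have hI : 0 ≤ ∫ x : ℝ, jb x ^ m :=
    integral_nonneg fun x => Real.rpow_nonneg (jb_pos x).le m
  refine ⟨C * C' * (2 ^ (-m) * 2 ^ (-m)) *
    ((2 * ∫ x : ℝ, jb x ^ m) * (2 * ∫ x : ℝ, jb x ^ m)), by positivity, fun z hz x y => ?_⟩
  have i1 : ∀ x : ℝ, Integrable (fun t : ℝ => jb (x - t) ^ m + jb t ^ m) := fun x =>
    ((integrable_jb hm).comp_sub_left x).add (integrable_jb hm)
  have i2 : ∀ x : ℝ, ∫ t : ℝ, (jb (x - t) ^ m + jb t ^ m) = 2 * ∫ t : ℝ, jb t ^ m := by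
    intro x
    rw [integral_add ((integrable_jb hm).comp_sub_left x) (integrable_jb hm),
      integral_sub_left_eq_self (fun t : ℝ => jb t ^ m) volume x]
    ring
  have i3 : Integrable (fun q : ℝ × ℝ => (C * C' * (2 ^ (-m) * 2 ^ (-m) * wt m m x y)) *
      ((jb (x - q.1) ^ m + jb q.1 ^ m) * (jb (y - q.2) ^ m + jb q.2 ^ m))) :=
    ((i1 x).mul_prod (i1 y)).const_mul _
  have key := norm_integral_le_of_norm_le i3 (f := fun q : ℝ × ℝ =>
    a (z, (x, y) - q) * b (z, q)) (Filter.Eventually.of_forall fun q => ?_)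
  · refine key.trans (le_of_eq ?_)
    rw [integral_const_mul]
    have := integral_prod_mul (μ := (volume : Measure ℝ)) (ν := (volume : Measure ℝ))
      (fun t : ℝ => jb (x - t) ^ m + jb t ^ m) (fun t : ℝ => jb (y - t) ^ m + jb t ^ m)
    rw [i2, i2] at this
    rw [← this, ← Measure.volume_eq_prod]
    ring
  · have h1 : ‖a (z, (x, y) - q)‖ ≤ _ := h z hz (x - q.1) (y - q.2)
    have h2 : ‖b (z, q)‖ ≤ _ := h' z hz q.1 q.2
    have h3 := wt_conv (m := m) (by linarith) x y q
    have w1 := (wt_pos m m (x - q.1) (y - q.2)).le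
    rw [norm_mul]
    calc _ ≤ (C * wt m m (x - q.1) (y - q.2)) * (C' * wt m m q.1 q.2) :=
          mul_le_mul h1 h2 (norm_nonneg _) (by positivity)
      _ = C * C' * (wt m m (x - q.1) (y - q.2) * wt m m q.1 q.2) := by ring
      _ ≤ C * C' * _ := mul_le_mul_of_nonneg_left h3 (by positivity)
      _ = _ := by ring

/-- the projection killing the fibre variables -/
def pz : EE M →L[ℝ] EE M :=
  (ContinuousLinearMap.inl ℝ (Fin M → ℝ) (ℝ × ℝ)).comp
    (ContinuousLinearMap.fst ℝ (Fin M → ℝ) (ℝ × ℝ))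

lemma pz_apply (v : EE M) : pz v = (v.1, 0) := rfl

lemma hasFDerivAt_left {a : EE M → ℂ} (ha : Smooth a) (q : ℝ × ℝ) (p : EE M) :
    HasFDerivAt (fun p : EE M => a (p.1, p.2 - q)) (fderiv ℝ a (p.1, p.2 - q)) p := by
  have h1 : HasFDerivAt (fun p : EE M => p - ((0, q) : EE M)) (ContinuousLinearMap.id ℝ _) p :=
    (hasFDerivAt_id p).sub_const _
  have e : ∀ p : EE M, p - ((0, q) : EE M) = (p.1, p.2 - q) := fun p => by ext <;> simp
  have h2 := (ha.diff (p - ((0, q) : EE M))).hasFDerivAt.comp p h1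
  simp only [Function.comp_def, e, ContinuousLinearMap.comp_id] at h2
  exact h2

lemma hasFDerivAt_right {b : EE M → ℂ} (hb : Smooth b) (q : ℝ × ℝ) (p : EE M) :
    HasFDerivAt (fun p : EE M => b (p.1, q)) ((fderiv ℝ b (p.1, q)).comp pz) p := by
  have h1 : HasFDerivAt (fun p : EE M => pz p + ((0, q) : EE M)) (pz : EE M →L[ℝ] EE M) p :=
    (pz.hasFDerivAt).add_const _
  have e : ∀ p : EE M, pz p + ((0, q) : EE M) = (p.1, q) := fun p => by
    ext <;> simp [pz_apply]
  have h2 := (hb.diff (pz p + ((0, q) : EE M))).hasFDerivAt.comp p h1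
  simp only [Function.comp_def, e] at h2
  exact h2

lemma norm_pz_le : ‖(pz : EE M →L[ℝ] EE M)‖ ≤ 1 := by
  refine ContinuousLinearMap.opNorm_le_bound _ zero_le_one fun v => ?_
  rw [pz_apply, one_mul, Prod.norm_mk]
  simpa using norm_fst_le v

lemma conv_deriv {m : ℝ} (hm : m < -1) {a b : EE M → ℂ} (ha : Sym m m a) (hb : Sym m m b)
    (p₀ : EE M) : DifferentiableAt ℝ (Conv a b) p₀ ∧
      ∀ v, fderiv ℝ (Conv a b) p₀ v = Conv (D v a) b p₀ + Conv a (D (pz v) b) p₀ := by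
  have hm0 : m ≤ 0 := by linarith
  have hK : IsCompact (Metric.closedBall p₀.1 1) := isCompact_closedBall _ _
  set K := Metric.closedBall p₀.1 1
  obtain ⟨C1, hC1, h1⟩ := ha.bd.J hm0 K hK
  obtain ⟨C2, hC2, h2⟩ := hb.bd.J hm0 K hK
  obtain ⟨C3, hC3, h3⟩ := fderiv_J hm0 ha K hK
  obtain ⟨C4, hC4, h4⟩ := fderiv_J hm0 hb K hK
  have ca := ha.smooth.continuous
  have cb := hb.smooth.continuous
  have cda : Continuous (fderiv ℝ a) := ha.smooth.continuous_fderiv (by simp)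
  have cdb : Continuous (fderiv ℝ b) := hb.smooth.continuous_fderiv (by simp)
  let F : EE M → ℝ × ℝ → ℂ := fun p q => a (p.1, p.2 - q) * b (p.1, q)
  let F' : EE M → ℝ × ℝ → (EE M →L[ℝ] ℂ) := fun p q =>
    a (p.1, p.2 - q) • ((fderiv ℝ b (p.1, q)).comp pz) + b (p.1, q) • fderiv ℝ a (p.1, p.2 - q)
  have hF'm : AEStronglyMeasurable (F' p₀) := by
    refine Continuous.aestronglyMeasurable ?_
    refine ((cont_slice' ca p₀).smul ?_).add ((cont_slice cb p₀.1).smul (cont_slice' cda p₀))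
    exact (cont_slice cdb p₀.1).clm_comp continuous_const
  have hbound : ∀ q : ℝ × ℝ, ∀ p ∈ Metric.ball p₀ 1, ‖F' p q‖ ≤ (C1 * C4 + C2 * C3) * J m q := by
    intro q p hp
    have hz : p.1 ∈ K := by
      have : dist p p₀ < 1 := hp
      exact (le_trans (by rw [Prod.dist_eq]; exact le_max_left _ _) this.le)
    have J1 := J_nonneg m q
    have J2 := J_nonneg m (p.2 - q)
    have J3 := J_le_one hm0 (p.2 - q)
    have a1 : ‖a (p.1, p.2 - q)‖ ≤ C1 :=
      (h1 _ hz _).trans (mul_le_of_le_one_right hC1 J3)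
    have a3 : ‖fderiv ℝ a (p.1, p.2 - q)‖ ≤ C3 :=
      (h3 _ hz _).trans (mul_le_of_le_one_right hC3 J3)
    have a2 := h2 _ hz q
    have a4 := h4 _ hz q
    have a5 : ‖(fderiv ℝ b (p.1, q)).comp pz‖ ≤ C4 * J m q :=
      (ContinuousLinearMap.opNorm_comp_le _ _).trans
        ((mul_le_of_le_one_right (norm_nonneg _) norm_pz_le).trans a4)
    refine (norm_add_le _ _).trans ?_
    rw [norm_smul, norm_smul]
    calc _ ≤ C1 * (C4 * J m q) + (C2 * J m q) * C3 := by gcongr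
      _ = _ := by ring
  have hint : Integrable (fun q => (C1 * C4 + C2 * C3) * J m q) := (integrable_J hm).const_mul _
  have hba : Bdd a := ha.bd.bdd hm0 (by linarith)
  have key := hasFDerivAt_integral_of_dominated_of_fderiv_le (𝕜 := ℝ) (F := F) (F' := F')
    (x₀ := p₀) (μ := (volume : Measure (ℝ × ℝ))) (Metric.ball_mem_nhds p₀ one_pos)
    (Filter.Eventually.of_forall fun p =>
      ((cont_slice' ca p).mul (cont_slice cb p.1)).aestronglyMeasurable)
    (int_right hm ha.smooth hb.smooth hba hb.bd p₀) hF'm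
    (Filter.Eventually.of_forall hbound) hint
    (Filter.Eventually.of_forall fun q p _ =>
      (hasFDerivAt_left ha.smooth q p).mul (hasFDerivAt_right hb.smooth q p))
  have hF'i : Integrable (F' p₀) := hint.mono' hF'm (Filter.Eventually.of_forall fun q =>
    hbound q p₀ (Metric.mem_ball_self one_pos))
  refine ⟨key.differentiableAt, fun v => ?_⟩
  have e : fderiv ℝ (Conv a b) p₀ = ∫ q, F' p₀ q := key.fderiv
  rw [e, ContinuousLinearMap.integral_apply hF'i]
  have i1 := int_right hm (ha.smooth.D v) hb.smooth ((ha.Dv v).bd.bdd hm0 (by linarith)) hb.bd p₀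
  have i2 := int_right hm ha.smooth (hb.smooth.D (pz v)) hba (hb.Dv (pz v)).bd p₀
  rw [Conv, Conv, ← integral_add i1 i2]
  congr 1
  ext q
  simp [F', D]
  ring

lemma D_conv {m : ℝ} (hm : m < -1) {a b : EE M → ℂ} (ha : Sym m m a) (hb : Sym m m b)
    (v : EE M) : D v (Conv a b) = Conv (D v a) b + Conv a (D (pz v) b) := by
  ext p; exact (conv_deriv hm ha hb p).2 v

lemma smooth_conv {m : ℝ} (hm : m < -1) {a b : EE M → ℂ} (ha : Sym m m a) (hb : Sym m m b) :
    Smooth (Conv a b) := by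
  refine contDiff_infty.2 fun n => ?_
  induction n generalizing a b with
  | zero =>
    simp only [Nat.cast_zero]
    exact contDiff_zero.2 (Differentiable.continuous (𝕜 := ℝ)
      fun p => (conv_deriv hm ha hb p).1)
  | succ n ih =>
    push_cast
    refine contDiff_succ_iff_fderiv_apply.2 ⟨fun p => (conv_deriv hm ha hb p).1,
      fun h => absurd h (by simp), fun v => ?_⟩
    have := D_conv hm ha hb v
    unfold D at this
    rw [this]
    exact (ih (ha.Dv v) hb).add (ih ha (hb.Dv (pz v)))

lemma D_zero' (b : EE M → ℂ) : D 0 b = 0 := by ext; simp [D]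

lemma conv_zero' (a : EE M → ℂ) : Conv a 0 = 0 := by ext; simp [Conv]

/-- integration by parts in the fibre -/
lemma conv_parts {m : ℝ} (hm : m < -1) {a g : EE M → ℂ} (ha : Sym m m a) (hg : Smooth g)
    (hgb : Bdd g) (w : ℝ × ℝ) (hDg : Bdd (D (0, w) g)) :
    Conv (D (0, w) a) g = Conv a (D (0, w) g) := by
  ext p
  have hf : ∀ q : ℝ × ℝ, HasFDerivAt (fun q : ℝ × ℝ => a (p.1, p.2 - q))
      ((fderiv ℝ a (p.1, p.2 - q)).comp
        (-(ContinuousLinearMap.inr ℝ (Fin M → ℝ) (ℝ × ℝ)))) q := by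
    intro q
    have h1 : HasFDerivAt (fun q : ℝ × ℝ => ((p.1, p.2 - q) : EE M))
        (-(ContinuousLinearMap.inr ℝ (Fin M → ℝ) (ℝ × ℝ))) q := by
      have := ((ContinuousLinearMap.inr ℝ (Fin M → ℝ) (ℝ × ℝ)).hasFDerivAt (x := q)).const_sub p
      refine this.congr_of_eventuallyEq (Filter.Eventually.of_forall fun q => ?_)
      ext <;> simp
    exact (ha.smooth.diff _).hasFDerivAt.comp q h1
  have hg' : ∀ q : ℝ × ℝ, HasFDerivAt (fun q : ℝ × ℝ => g (p.1, q))
      ((fderiv ℝ g (p.1, q)).comp (ContinuousLinearMap.inr ℝ (Fin M → ℝ) (ℝ × ℝ))) q := by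
    intro q
    have h1 : HasFDerivAt (fun q : ℝ × ℝ => ((p.1, q) : EE M))
        (ContinuousLinearMap.inr ℝ (Fin M → ℝ) (ℝ × ℝ)) q := by
      have := ((ContinuousLinearMap.inr ℝ (Fin M → ℝ) (ℝ × ℝ)).hasFDerivAt (x := q)).const_add
        ((p.1, 0) : EE M)
      refine this.congr_of_eventuallyEq (Filter.Eventually.of_forall fun q => ?_)
      ext <;> simp
    exact (hg.diff _).hasFDerivAt.comp q h1
  have e1 : ∀ q, fderiv ℝ (fun q : ℝ × ℝ => a (p.1, p.2 - q)) q w =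
      - D (0, w) a (p.1, p.2 - q) := by
    intro q; rw [(hf q).fderiv]
    simp [D]
  have e2 : ∀ q, fderiv ℝ (fun q : ℝ × ℝ => g (p.1, q)) q w = D (0, w) g (p.1, q) := by
    intro q; rw [(hg' q).fderiv]
    simp [D]
  have key := integral_mul_fderiv_eq_neg_fderiv_mul_of_integrable
    (μ := (volume : Measure (ℝ × ℝ))) (f := fun q : ℝ × ℝ => a (p.1, p.2 - q))
    (g := fun q : ℝ × ℝ => g (p.1, q)) (v := w) ?_ ?_
    (int_left hm ha.smooth hg ha.bd hgb p)
    (fun q _ => (hf q).differentiableAt) (fun q _ => (hg' q).differentiableAt)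
  · simp only [e1, e2, neg_mul, integral_neg, neg_neg] at key
    exact key.symm
  · simp only [e1, neg_mul]
    exact (int_left hm (ha.smooth.D _) hg (ha.Dv _).bd hgb p).neg
  · simp only [e2]
    exact int_left hm ha.smooth (hg.D _) ha.bd hDg p

/-- multiplication by a fibre-linear function distributes over convolution -/
lemma mulL_conv {a b : EE M → ℂ} (l : EE M →L[ℝ] ℝ) (hl : ∀ z, l (z, 0) = 0)
    (h1 : ∀ p : EE M, Integrable (fun q : ℝ × ℝ => mulL l a (p.1, p.2 - q) * b (p.1, q)))
    (h2 : ∀ p : EE M, Integrable (fun q : ℝ × ℝ => a (p.1, p.2 - q) * mulL l b (p.1, q))) :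
    mulL l (Conv a b) = Conv (mulL l a) b + Conv a (mulL l b) := by
  ext p
  simp only [Pi.add_apply]
  have e : mulL l (Conv a b) p = (l p : ℂ) * ∫ q : ℝ × ℝ, a (p.1, p.2 - q) * b (p.1, q) := rfl
  rw [e, ← integral_const_mul, Conv, Conv, ← integral_add (h1 p) (h2 p)]
  congr 1
  ext q
  have : l p = l (p.1, p.2 - q) + l (p.1, q) := by
    have h0 := hl p.1
    rw [← map_add]
    have : ((p.1, p.2 - q) : EE M) + (p.1, q) = p + (p.1, 0) := by ext <;> simp
    rw [this, map_add, h0, add_zero]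
  simp only [mulL, this]
  push_cast
  ring

lemma hlx (z : Fin M → ℝ) : lx ((z, 0) : EE M) = 0 := rfl
lemma hly (z : Fin M → ℝ) : ly ((z, 0) : EE M) = 0 := rfl

/-- the vector-field identity -/
lemma mulL_conv_D {m : ℝ} (hm : m < -1) {a b : EE M → ℂ} (ha : Sym m m a) (hb : Sym m m b)
    (l : EE M →L[ℝ] ℝ) (hl : ∀ z, l (z, 0) = 0) (w : ℝ × ℝ)
    (hA : Bd m m (mulL l (D (0, w) a))) (hB : Bdd (mulL l b))
    (hDB : Bd m m (D (0, w) (mulL l b))) :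
    mulL l (D (0, w) (Conv a b)) =
      Conv (mulL l (D (0, w) a)) b + Conv a (D (0, w) (mulL l b)) := by
  have hm0 : m ≤ 0 := by linarith
  have e : D (0, w) (Conv a b) = Conv (D (0, w) a) b := by
    rw [D_conv hm ha hb]
    have : (pz ((0, w) : EE M)) = 0 := rfl
    rw [this, D_zero', conv_zero', add_zero]
  rw [e, mulL_conv l hl, conv_parts hm ha (hb.smooth.mulL l) hB w (hDB.bdd hm0 (by linarith))]
  · exact int_left hm ((ha.smooth.D _).mulL l) hb.smooth hA (hb.bd.bdd hm0 (by linarith))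
  · exact int_left hm (ha.smooth.D _) (hb.smooth.mulL l) (ha.Dv _).bd hB

lemma symN_conv {m : ℝ} (hm : m < -1) (n : ℕ) : ∀ {a b : EE M → ℂ}, Sym m m a → Sym m m b →
    SymN n m m (Conv a b) := by
  induction n with
  | zero => intro a b ha hb; exact ⟨smooth_conv hm ha hb, ha.bd.conv hm hb.bd⟩
  | succ n ih =>
    intro a b ha hb
    have hm0 : m ≤ 0 := by linarith
    have hD : ∀ v, SymN n m m (D v (Conv a b)) := fun v => by
      rw [D_conv hm ha hb]
      exact (ih (ha.Dv v) hb).add (ih ha (hb.Dv _))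
    have hV : ∀ (l : EE M →L[ℝ] ℝ), (∀ z, l (z, 0) = 0) → ∀ w : ℝ × ℝ,
        Sym m m (mulL l (D (0, w) a)) → Bdd (mulL l b) → Sym m m (D (0, w) (mulL l b)) →
        SymN n m m (mulL l (D (0, w) (Conv a b))) := by
      intro l hl w h1 h2 h3
      rw [mulL_conv_D hm ha hb l hl w h1.bd h2 h3.bd]
      exact (ih h1 hb).add (ih ha h3)
    have bx : Bdd (mulL lx b) := hb.mulx.bd.bdd (by linarith) (by linarith)
    have bY : Bdd (mulL ly b) := hb.muly.bd.bdd (by linarith) (by linarith)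
    refine ⟨⟨smooth_conv hm ha hb, ha.bd.conv hm hb.bd⟩, fun i => hD _, ?_, ?_⟩
    · refine (hD ex).dropx ?_ ?_
      · exact hV lx hlx (1, 0) (ha.Dx.mulx.mono (by linarith) (by linarith)) bx
          (hb.mulx.Dx.mono (by linarith) (by linarith))
      · exact hV ly hly (1, 0) (ha.Dx.muly.mono (by linarith) (by linarith)) bY
          (hb.muly.Dx.mono (by linarith) (by linarith))
    · refine (hD ey).dropy ?_
      exact hV ly hly (0, 1) (ha.Dy.muly.mono (by linarith) (by linarith)) bY
          (hb.muly.Dy.mono (by linarith) (by linarith))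

lemma Smooth.iter {f : EE M → ℂ} (hf : Smooth f) (v : EE M) (n : ℕ) : Smooth ((PS.D v)^[n] f) := by
  induction n with
  | zero => exact hf
  | succ n ih => rw [Function.iterate_succ_apply']; exact ih.D v

lemma iter_comm {f : EE M → ℂ} (hf : Smooth f) (v w : EE M) (n : ℕ) :
    (D v)^[n] (D w f) = D w ((D v)^[n] f) := by
  induction n with
  | zero => rfl
  | succ n ih =>
    rw [Function.iterate_succ_apply', Function.iterate_succ_apply', ih, D_comm (hf.iter v n)]

/-- normal-form derivative -/
def NF (L : List (Fin M)) (α β : ℕ) (f : EE M → ℂ) : EE M → ℂ :=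
  L.foldr (fun i => D (ez i)) ((D ex)^[α] ((D ey)^[β] f))

lemma NF_z {f : EE M → ℂ} (hf : Smooth f) (L : List (Fin M)) (α β : ℕ) (i : Fin M) :
    NF L α β (D (ez i) f) = NF (L ++ [i]) α β f := by
  simp [NF, iter_comm hf, iter_comm (hf.iter _ _)]

lemma NF_x {f : EE M → ℂ} (hf : Smooth f) (L : List (Fin M)) (α β : ℕ) :
    NF L α β (D ex f) = NF L (α + 1) β f := by
  simp only [NF, iter_comm hf, Function.iterate_succ_apply]

lemma NF_y (f : EE M → ℂ) (L : List (Fin M)) (α β : ℕ) :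
    NF L α β (D ey f) = NF L α (β + 1) f := by
  simp only [NF, Function.iterate_succ_apply]

lemma symN_of_NF (n : ℕ) : ∀ {p q : ℝ} {f : EE M → ℂ}, Smooth f →
    (∀ L (α β : ℕ), Bd (p - α) (q - β) (NF L α β f)) → SymN n p q f := by
  induction n with
  | zero =>
    intro p q f hf h
    have := h [] 0 0
    simp [NF] at this
    exact ⟨hf, this⟩
  | succ n ih =>
    intro p q f hf h
    have h0 := h [] 0 0
    simp [NF] at h0
    refine ⟨⟨hf, h0⟩, fun i => ih (hf.D _) fun L α β => ?_, ih (hf.D _) fun L α β => ?_,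
      ih (hf.D _) fun L α β => ?_⟩
    · rw [NF_z hf]; exact h _ _ _
    · rw [NF_x hf]
      have := h L (α + 1) β
      push_cast at this
      exact this.mono (by linarith) (by linarith)
    · rw [NF_y]
      have := h L α (β + 1)
      push_cast at this
      exact this.mono (by linarith) (by linarith)

lemma Sym.iterx {p q : ℝ} {f : EE M → ℂ} (h : Sym p q f) (α : ℕ) :
    Sym (p - α) q ((D ex)^[α] f) := by
  induction α with
  | zero => simpa using h
  | succ n ih =>
    rw [Function.iterate_succ_apply']
    push_cast
    exact ih.Dx.mono (by linarith) (by linarith)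

lemma Sym.itery {p q : ℝ} {f : EE M → ℂ} (h : Sym p q f) (β : ℕ) :
    Sym p (q - β) ((D ey)^[β] f) := by
  induction β with
  | zero => simpa using h
  | succ n ih =>
    rw [Function.iterate_succ_apply']
    push_cast
    exact ih.Dy.mono (by linarith) (by linarith)

lemma Sym.NF {p q : ℝ} {f : EE M → ℂ} (h : Sym p q f) (L : List (Fin M)) (α β : ℕ) :
    Sym (p - α) (q - β) (NF L α β f) := by
  induction L with
  | nil => exact (h.itery β).iterx α
  | cons i L ih => exact ih.Dz i

lemma smooth_foldr {f : EE M → ℂ} (hf : Smooth f) (L : List (Fin M)) :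
    Smooth (L.foldr (fun i => D (ez i)) f) := by
  induction L with
  | nil => exact hf
  | cons i L ih => exact ih.D _

lemma dirDerivs_eq {f : EE M → ℂ} (hf : Smooth f) (L : List (Fin M)) (ξ η : ℝ) :
    dirDerivs L (fun z => f (z, ξ, η)) = fun z => L.foldr (fun i => D (ez i)) f (z, ξ, η) := by
  induction L with
  | nil => rfl
  | cons i L ih =>
    have e : dirDerivs (i :: L) (fun z => f (z, ξ, η)) =
      dirDeriv i (dirDerivs L (fun z => f (z, ξ, η))) := rfl
    rw [e, ih]
    ext z
    have h := hasFDerivAt_right (smooth_foldr hf L) (ξ, η) (z, 0)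
    have h1 : HasFDerivAt (fun z : Fin M → ℝ => ((z, 0) : EE M))
      (ContinuousLinearMap.inl ℝ (Fin M → ℝ) (ℝ × ℝ)) z :=
      (ContinuousLinearMap.inl ℝ (Fin M → ℝ) (ℝ × ℝ)).hasFDerivAt
    have h2 := (HasFDerivAt.comp z h h1).fderiv
    simp only [Function.comp_def] at h2
    simp only [dirDeriv, h2]
    rfl

lemma iteratedDeriv_x {f : EE M → ℂ} (hf : Smooth f) (z : Fin M → ℝ) (η : ℝ) (n : ℕ) :
    iteratedDeriv n (fun ξ => f (z, ξ, η)) = fun ξ => (D ex)^[n] f (z, ξ, η) := by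
  induction n with
  | zero => simp
  | succ n ih =>
    rw [iteratedDeriv_succ, ih]
    ext ξ
    have h1 : HasDerivAt (fun ξ : ℝ => ((z, ξ, η) : EE M)) ex ξ :=
      (hasDerivAt_const ξ z).prodMk ((hasDerivAt_id ξ).prodMk (hasDerivAt_const ξ η))
    have := ((hf.iter ex n).diff (z, ξ, η)).hasFDerivAt.comp_hasDerivAt ξ h1
    rw [Function.iterate_succ_apply']
    exact this.deriv

lemma iteratedDeriv_y {f : EE M → ℂ} (hf : Smooth f) (z : Fin M → ℝ) (ξ : ℝ) (n : ℕ) :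
    iteratedDeriv n (fun η => f (z, ξ, η)) = fun η => (D ey)^[n] f (z, ξ, η) := by
  induction n with
  | zero => simp
  | succ n ih =>
    rw [iteratedDeriv_succ, ih]
    ext η
    have h1 : HasDerivAt (fun η : ℝ => ((z, ξ, η) : EE M)) ey η :=
      (hasDerivAt_const η z).prodMk ((hasDerivAt_const η ξ).prodMk (hasDerivAt_id η))
    have := ((hf.iter ey n).diff (z, ξ, η)).hasFDerivAt.comp_hasDerivAt η h1
    rw [Function.iterate_succ_apply']
    exact this.deriv

lemma nf_eq {f : EE M → ℂ} (hf : Smooth f) (L : List (Fin M)) (α β : ℕ) (z : Fin M → ℝ)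
    (ξ η : ℝ) :
    dirDerivs L (fun z' => iteratedDeriv α (fun ξ' =>
      iteratedDeriv β (fun η' => f (z', ξ', η')) η) ξ) z = NF L α β f (z, ξ, η) := by
  simp only [iteratedDeriv_y hf, iteratedDeriv_x (hf.iter ey β)]
  rw [dirDerivs_eq ((hf.iter ey β).iter ex α)]
  rfl

lemma sym_iff {m : ℝ} {f : EE M → ℂ} (hf : Smooth f) :
    IsProdSymbolOfOrder m (fun z ξ η => f (z, ξ, η)) ↔ Sym m m f := by
  constructor
  · intro h n
    refine symN_of_NF n hf fun L α β K hK => ?_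
    obtain ⟨C, hC⟩ := h L α β K hK
    refine ⟨max C 0, le_max_right _ _, fun z hz x y => ?_⟩
    have h1 := hC z hz x y
    rw [nf_eq hf, mul_assoc] at h1
    exact h1.trans (mul_le_mul_of_nonneg_right (le_max_left _ _) (wt_pos _ _ x y).le)
  · intro h L α β K hK
    obtain ⟨C, _, hC⟩ := (h.NF L α β).bd K hK
    refine ⟨C, fun z hz x y => ?_⟩
    rw [nf_eq hf, mul_assoc]
    exact hC z hz x y

end PS

/-- If `m < -1` and `a, b` are (smooth) product-type symbols of order `(m, m)`, then the
fiberwise convolution `c(z,ξ,η) = ∬ a(z,ξ-ζ,η-τ) b(z,ζ,τ) dζ dτ` satisfies the same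
product-type symbol estimates. -/
theorem convolution_isProdSymbolOfOrder {M : ℕ} (m : ℝ) (hm : m < -1)
    (a b : (Fin M → ℝ) → ℝ → ℝ → ℂ)
    (ha : ContDiff ℝ (⊤ : ℕ∞) (fun p : (Fin M → ℝ) × ℝ × ℝ => a p.1 p.2.1 p.2.2))
    (hb : ContDiff ℝ (⊤ : ℕ∞) (fun p : (Fin M → ℝ) × ℝ × ℝ => b p.1 p.2.1 p.2.2))
    (hsa : IsProdSymbolOfOrder m a) (hsb : IsProdSymbolOfOrder m b) :
    IsProdSymbolOfOrder m
      (fun z ξ η => ∫ p : ℝ × ℝ, a z (ξ - p.1) (η - p.2) * b z p.1 p.2) := by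
  have hA := (PS.sym_iff (f := fun p : PS.EE M => a p.1 p.2.1 p.2.2) ha).1 hsa
  have hB := (PS.sym_iff (f := fun p : PS.EE M => b p.1 p.2.1 p.2.2) hb).1 hsb
  exact (PS.sym_iff (PS.smooth_conv hm hA hB)).2 fun n => PS.symN_conv hm n hA hB
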